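/- Let N ≥ 2 and let g : ℝ → ℝ be any function that is unbounded below on (−∞, 0] (for instance any increasing bijection of ℝ). Then there exists X ∈ 𝕊(N) with X ≤ I such that −F₁(e_N, X) > g(λ₁(X)). (One may take X = diag(1, 1, …, 1, c) for a suitable c ≤ 0, for which λ₁(X) = c and −F₁(e_N, X) = N − 1.) In particular, the 1-Laplace function F₁ does not belong to Class M. -/

import Mathlib

open Matrix

/-- The Loewner partial order on matrices: `X ≤ Y` iff `Y - X` is positive semidefinite. -/
def Loewner {n : Type*} [Fintype n] (X Y : Matrix n n ℝ) : Prop := (Y - X).PosSemidef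

/-- The eigenvalues of a real symmetric matrix, listed in increasing order. -/
noncomputable def eigs {N : ℕ} (X : Matrix (Fin N) (Fin N) ℝ) : Fin N → ℝ :=
  if h : X.IsHermitian then h.eigenvalues ∘ Tuple.sort h.eigenvalues else 0

/-- The smallest eigenvalue of a real symmetric matrix. -/
noncomputable def lam1 {N : ℕ} (X : Matrix (Fin N) (Fin N) ℝ) : ℝ := ⨅ i, eigs X i

/-- The largest eigenvalue of a real symmetric matrix. -/
noncomputable def lamN {N : ℕ} (X : Matrix (Fin N) (Fin N) ℝ) : ℝ := ⨆ i, eigs X i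

/-- The p-Laplace function
`F_p(ν, X) = −|ν|^{p−2} (tr X + (p−2) ⟨Xν, ν⟩ / |ν|²)`. -/
noncomputable def Fp {N : ℕ} (p : ℝ) (ν : EuclideanSpace ℝ (Fin N))
    (X : Matrix (Fin N) (Fin N) ℝ) : ℝ :=
  -(‖ν‖ ^ (p - 2)) * (X.trace +
    (p - 2) * (X.mulVec ((WithLp.equiv 2 (Fin N → ℝ)) ν) ⬝ᵥ (WithLp.equiv 2 (Fin N → ℝ)) ν)
      / ‖ν‖ ^ (2 : ℕ))

/-- The 1-Laplace function violates condition (3) of Class M (with `M = I`):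
for any `g` unbounded below on `(−∞, 0]` there is `X ≤ I` with `−F₁(e_N, X) > g(λ₁(X))`. -/
theorem oneLaplace_not_classM {N : ℕ} (hN : 2 ≤ N)
    (g : ℝ → ℝ) (hg : ∀ C : ℝ, ∃ t : ℝ, t ≤ 0 ∧ g t < C) :
    ∃ X : Matrix (Fin N) (Fin N) ℝ, X.IsHermitian ∧
      Loewner X (1 : Matrix (Fin N) (Fin N) ℝ) ∧
      -Fp 1 (EuclideanSpace.single (⟨N - 1, by omega⟩ : Fin N) (1 : ℝ)) X > g (lam1 X) := by
  obtain ⟨c, hc, hgc⟩ := hg ((N : ℝ) - 1)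
  set l : Fin N := ⟨N - 1, by omega⟩ with hl
  set d : Fin N → ℝ := fun i => if i = l then c else 1 with hd
  have hH : (Matrix.diagonal d).IsHermitian := Matrix.isHermitian_diagonal d
  have hlam : lam1 (Matrix.diagonal d) = c := by
    have hr : Set.range hH.eigenvalues = Set.range d := by
      rw [← hH.spectrum_real_eq_range_eigenvalues, spectrum_diagonal]
    have h1 : lam1 (Matrix.diagonal d) = ⨅ i, hH.eigenvalues i := by
      unfold lam1 eigs
      rw [dif_pos hH]
      exact (Tuple.sort hH.eigenvalues).iInf_comp (g := hH.eigenvalues)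
    rw [h1, iInf, hr]
    apply IsLeast.csInf_eq
    refine ⟨⟨l, by simp [hd]⟩, ?_⟩
    rintro _ ⟨i, rfl⟩
    simp only [hd]
    split_ifs <;> linarith
  refine ⟨Matrix.diagonal d, hH, ?_, ?_⟩
  · unfold Loewner
    rw [← Matrix.diagonal_one, Matrix.diagonal_sub, Matrix.posSemidef_diagonal_iff]
    intro i
    simp only [hd]
    split_ifs <;> linarith
  · rw [hlam]
    have ht : ∑ i, d i = (N : ℝ) - 1 + c := by
      have : ∀ i, d i = 1 + (if i = l then c - 1 else 0) := by
        intro i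
        simp only [hd]
        split_ifs <;> ring
      simp only [this, Finset.sum_add_distrib, Finset.sum_ite_eq', Finset.mem_univ, if_true]
      simp
      ring
    have hF : -Fp 1 (EuclideanSpace.single l (1 : ℝ)) (Matrix.diagonal d) = (N : ℝ) - 1 := by
      unfold Fp
      have hdl : d l = c := by simp [hd]
      have hq : ((Matrix.diagonal d).mulVec ((WithLp.equiv 2 (Fin N → ℝ)) (EuclideanSpace.single l (1 : ℝ))) ⬝ᵥ (WithLp.equiv 2 (Fin N → ℝ)) (EuclideanSpace.single l (1 : ℝ))) = c := by
        simp [hdl]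
      rw [hq, Matrix.trace_diagonal, ht]
      simp
      ring
    rw [hF]
    exact hgc
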